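/- Let α_1, …, α_r be an orthogonal sequence of long roots in Φ(g/p). Suppose γ_1, γ_2 ∈ Φ satisfy, for k = 1, 2: m_α(γ_k) = 0, ⟨γ_k, α_i⟩ ≤ 0 for all i ∈ {1, …, r}, and ⟨γ_k, α_i⟩ = −1 for exactly one index i. Then γ_1 + γ_2 ≠ 0 and γ_1 + γ_2 ∉ Φ. (This is the root-theoretic content of the assertion that the flag variety L/Q is cominuscule.) -/

import Mathlib

open scoped RealInnerProductSpace

/-- The Cartan pairing `⟨β, γ⟩ = 2(β,γ)/(γ,γ)`. -/
noncomputable def rpair {V : Type*} [NormedAddCommGroup V] [InnerProductSpace ℝ V]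
    (β γ : V) : ℝ := 2 * ⟪β, γ⟫ / ⟪γ, γ⟫

/-- An irreducible reduced crystallographic root system in a real inner product space,
equipped with a base `Δ` of simple roots, the coefficient function `m` (so that
`β = ∑_{δ ∈ Δ} m β δ • δ` for roots `β`) and the highest root `θ`. -/
structure IrredRootSystem (V : Type*) [NormedAddCommGroup V] [InnerProductSpace ℝ V] where
  Φ : Set V
  Δ : Finset V
  m : V → V → ℤ
  θ : V
  finite : Φ.Finite
  zero_notMem : (0 : V) ∉ Φ
  spans : Submodule.span ℝ Φ = ⊤
  neg_mem : ∀ β ∈ Φ, -β ∈ Φ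
  reflect_mem : ∀ β ∈ Φ, ∀ γ ∈ Φ, β - rpair β γ • γ ∈ Φ
  crystallographic : ∀ β ∈ Φ, ∀ γ ∈ Φ, ∃ z : ℤ, rpair β γ = z
  reduced : ∀ β ∈ Φ, ∀ t : ℝ, t • β ∈ Φ → t = 1 ∨ t = -1
  irreducible : ¬ ∃ A B : Set V, A.Nonempty ∧ B.Nonempty ∧ Disjoint A B ∧ A ∪ B = Φ ∧
      ∀ β ∈ A, ∀ γ ∈ B, ⟪β, γ⟫ = 0
  base_subset : ↑Δ ⊆ Φ
  base_indep : LinearIndependent ℝ (fun δ : Δ => (δ : V))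
  base_repr : ∀ β ∈ Φ, β = ∑ δ ∈ Δ, (m β δ : ℝ) • δ
  base_sign : ∀ β ∈ Φ, (∀ δ ∈ Δ, 0 ≤ m β δ) ∨ (∀ δ ∈ Δ, m β δ ≤ 0)
  theta_mem : θ ∈ Φ
  theta_highest : ∀ β ∈ Φ, ∀ δ ∈ Δ, m β δ ≤ m θ δ

namespace IrredRootSystem

variable {V : Type*} [NormedAddCommGroup V] [InnerProductSpace ℝ V]

/-- The positive roots `Φ⁺`. -/
def Pos (D : IrredRootSystem V) : Set V := {β | β ∈ D.Φ ∧ ∀ δ ∈ D.Δ, 0 ≤ D.m β δ}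

/-- The negative roots `Φ⁻`. -/
def Neg (D : IrredRootSystem V) : Set V := {β | β ∈ D.Φ ∧ ∀ δ ∈ D.Δ, D.m β δ ≤ 0}

/-- A long root: a root of maximal squared length. -/
def IsLong (D : IrredRootSystem V) (β : V) : Prop :=
  β ∈ D.Φ ∧ ∀ γ ∈ D.Φ, ⟪γ, γ⟫ ≤ ⟪β, β⟫

/-- `Φ(g/p)`: the roots whose coefficient on the cominuscule simple root `α` is `1`. -/
def gp (D : IrredRootSystem V) (α : V) : Set V := {β | β ∈ D.Φ ∧ D.m β α = 1}

/-- An orthogonal sequence of long roots in `Φ(g/p)`. -/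
def IsOrthLongSeq (D : IrredRootSystem V) (α : V) {r : ℕ} (a : Fin r → V) : Prop :=
  (∀ i, D.IsLong (a i)) ∧ (∀ i, a i ∈ D.gp α) ∧ ∀ i j, i ≠ j → ⟪a i, a j⟫ = 0

end IrredRootSystem

/-!
Reflecting a root `β` successively in pairwise orthogonal roots `αᵢ` gives the root
`β - ∑ᵢ ⟨β, αᵢ⟩ αᵢ`. If every `αᵢ` attains the maximal `α`-coefficient `n = m_α(θ)`, comparing
`α`-coefficients with those of `θ` yields `m_α(β) - n ∑ᵢ ⟨β, αᵢ⟩ ≤ n`. The total pairing is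
additive and at most `-1` on each of `γ₁`, `γ₂`, hence at most `-2` on `γ₁ + γ₂`. So `γ₁ + γ₂` is
nonzero, and if it were a root its `α`-coefficient would be at most `-n < 0`.
-/

section Pairing

variable {V : Type*} [NormedAddCommGroup V] [InnerProductSpace ℝ V]

theorem rpair_zero_left (γ : V) : rpair 0 γ = 0 := by
  simp [rpair]

theorem rpair_add_left (β₁ β₂ γ : V) : rpair (β₁ + β₂) γ = rpair β₁ γ + rpair β₂ γ := by
  rw [rpair, rpair, rpair, inner_add_left, mul_add, add_div]

theorem rpair_sub_left_of_inner_eq_zero {δ γ : V} (β : V) (h : ⟪δ, γ⟫ = 0) :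
    rpair (β - δ) γ = rpair β γ := by
  rw [rpair, rpair, inner_sub_left, h, sub_zero]

end Pairing

namespace IrredRootSystem

variable {V : Type*} [NormedAddCommGroup V] [InnerProductSpace ℝ V] (D : IrredRootSystem V)

theorem top_le_span_base : ⊤ ≤ Submodule.span ℝ (Set.range fun δ : D.Δ => (δ : V)) := by
  rw [← D.spans, Submodule.span_le]
  intro β hβ
  rw [D.base_repr β hβ]
  exact Submodule.sum_mem _ fun δ hδ =>
    Submodule.smul_mem _ _ (Submodule.subset_span ⟨⟨δ, hδ⟩, rfl⟩)

/-- The simple roots as a basis of the ambient space. Its coordinate functionals extend the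
coefficient functions `β ↦ D.m β δ`, which are only meaningful on roots, linearly to `V`. -/
noncomputable def simpleBasis : Module.Basis D.Δ ℝ V :=
  .mk D.base_indep D.top_le_span_base

theorem simpleBasis_apply (δ : D.Δ) : D.simpleBasis δ = δ :=
  Module.Basis.mk_apply ..

theorem simpleBasis_coord_of_mem (δ : D.Δ) {β : V} (hβ : β ∈ D.Φ) :
    D.simpleBasis.coord δ β = D.m β δ := by
  have hsum : β = ∑ ε : D.Δ, (D.m β ε : ℝ) • D.simpleBasis ε := by
    simp only [simpleBasis_apply]
    rw [Finset.sum_coe_sort D.Δ fun ε => (D.m β ε : ℝ) • ε]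
    exact D.base_repr β hβ
  conv_lhs => rw [hsum]
  rw [Module.Basis.coord_apply, Module.Basis.repr_sum_self]

theorem simpleBasis_coord_le (δ : D.Δ) {β : V} (hβ : β ∈ D.Φ) :
    D.simpleBasis.coord δ β ≤ D.m D.θ δ := by
  rw [D.simpleBasis_coord_of_mem δ hβ]
  exact_mod_cast D.theta_highest β hβ δ δ.2

theorem one_le_m_theta (δ : D.Δ) : (1 : ℝ) ≤ D.m D.θ δ := by
  have hδ : D.simpleBasis.coord δ δ = 1 := by
    rw [← D.simpleBasis_apply δ, Module.Basis.coord_apply, Module.Basis.repr_self,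
      Finsupp.single_eq_same]
  exact hδ ▸ D.simpleBasis_coord_le δ (D.base_subset δ.2)

variable {D}

theorem m_add {β γ : V} (hβ : β ∈ D.Φ) (hγ : γ ∈ D.Φ) (hβγ : β + γ ∈ D.Φ) (δ : D.Δ) :
    D.m (β + γ) δ = D.m β δ + D.m γ δ := by
  have h := map_add (D.simpleBasis.coord δ) β γ
  rw [D.simpleBasis_coord_of_mem δ hβ, D.simpleBasis_coord_of_mem δ hγ,
    D.simpleBasis_coord_of_mem δ hβγ] at h
  exact_mod_cast h

theorem rpair_le_neg_one_of_neg {β γ : V} (hβ : β ∈ D.Φ) (hγ : γ ∈ D.Φ) (h : rpair β γ < 0) :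
    rpair β γ ≤ -1 := by
  obtain ⟨z, hz⟩ := D.crystallographic β hβ γ hγ
  rw [hz] at h ⊢
  exact_mod_cast Int.le_sub_one_of_lt (Int.cast_lt_zero.mp h)

variable {ι : Type*} {a : ι → V}

theorem sum_rpair_le_neg_one {γ : V} (hγ : γ ∈ D.Φ) (ha : ∀ i, a i ∈ D.Φ)
    (hle : ∀ i, rpair γ (a i) ≤ 0) {s : Finset ι} {i : ι} (hi : i ∈ s)
    (hneg : rpair γ (a i) < 0) : ∑ k ∈ s, rpair γ (a k) ≤ -1 := by
  classical
  calc ∑ k ∈ s, rpair γ (a k)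
      = rpair γ (a i) + ∑ k ∈ s.erase i, rpair γ (a k) := (Finset.add_sum_erase s _ hi).symm
    _ ≤ rpair γ (a i) := add_le_of_nonpos_right (Finset.sum_nonpos fun k _ => hle k)
    _ ≤ -1 := rpair_le_neg_one_of_neg hγ (ha i) hneg

theorem sub_sum_rpair_smul_mem (ha : ∀ i, a i ∈ D.Φ)
    (horth : Pairwise fun i j => ⟪a i, a j⟫ = 0) {β : V} (hβ : β ∈ D.Φ) (s : Finset ι) :
    β - ∑ i ∈ s, rpair β (a i) • a i ∈ D.Φ := by
  classical
  induction s using Finset.induction_on with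
  | empty => simpa using hβ
  | insert j s hj ih =>
    have hinner : ⟪∑ i ∈ s, rpair β (a i) • a i, a j⟫ = 0 := by
      rw [sum_inner]
      refine Finset.sum_eq_zero fun i hi => ?_
      rw [real_inner_smul_left, horth (ne_of_mem_of_not_mem hi hj), mul_zero]
    have hreflect := D.reflect_mem _ ih _ (ha j)
    rw [rpair_sub_left_of_inner_eq_zero β hinner] at hreflect
    rwa [Finset.sum_insert hj, add_comm, ← sub_sub]

theorem m_sub_sum_rpair_mul_m_le (ha : ∀ i, a i ∈ D.Φ)
    (horth : Pairwise fun i j => ⟪a i, a j⟫ = 0) {β : V} (hβ : β ∈ D.Φ) (s : Finset ι)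
    (δ : D.Δ) : D.m β δ - ∑ i ∈ s, rpair β (a i) * D.m (a i) δ ≤ (D.m D.θ δ : ℝ) := by
  have hle := D.simpleBasis_coord_le δ (sub_sum_rpair_smul_mem ha horth hβ s)
  simpa only [map_sub, map_sum, map_smul, smul_eq_mul, D.simpleBasis_coord_of_mem δ hβ,
    D.simpleBasis_coord_of_mem δ (ha _)] using hle

end IrredRootSystem

open IrredRootSystem in
theorem levi_quotient_cominuscule_general {V : Type*} [NormedAddCommGroup V]
    [InnerProductSpace ℝ V] (D : IrredRootSystem V) {α : V} (hα : α ∈ D.Δ)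
    {ι : Type*} {a : ι → V} (ha : ∀ i, a i ∈ D.Φ) (hm : ∀ i, D.m (a i) α = D.m D.θ α)
    (horth : Pairwise fun i j => ⟪a i, a j⟫ = 0)
    {γ₁ γ₂ : V} (h₁ : γ₁ ∈ D.Φ) (h₂ : γ₂ ∈ D.Φ)
    (hm₁₂ : -D.m D.θ α < D.m γ₁ α + D.m γ₂ α)
    (hle₁ : ∀ i, rpair γ₁ (a i) ≤ 0) (hle₂ : ∀ i, rpair γ₂ (a i) ≤ 0)
    (hneg₁ : ∃ i, rpair γ₁ (a i) < 0) (hneg₂ : ∃ i, rpair γ₂ (a i) < 0) :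
    γ₁ + γ₂ ≠ 0 ∧ γ₁ + γ₂ ∉ D.Φ := by
  classical
  obtain ⟨i, hi⟩ := hneg₁
  obtain ⟨j, hj⟩ := hneg₂
  have hsum : ∑ k ∈ {i, j}, rpair (γ₁ + γ₂) (a k) ≤ -2 := by
    have hsum₁ := sum_rpair_le_neg_one h₁ ha hle₁ (Finset.mem_insert_self i {j}) hi
    have hsum₂ := sum_rpair_le_neg_one (s := {i, j}) h₂ ha hle₂ (by simp) hj
    simp only [rpair_add_left, Finset.sum_add_distrib]
    linarith
  refine ⟨fun hzero => ?_, fun hroot => ?_⟩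
  · simp only [hzero, rpair_zero_left, Finset.sum_const_zero] at hsum
    linarith
  · have hbound := m_sub_sum_rpair_mul_m_le ha horth hroot {i, j} ⟨α, hα⟩
    simp only [hm, ← Finset.sum_mul, m_add h₁ h₂ hroot ⟨α, hα⟩, Int.cast_add] at hbound
    have hlower : -(D.m D.θ α : ℝ) < D.m γ₁ α + D.m γ₂ α := by exact_mod_cast hm₁₂
    have hpos := D.one_le_m_theta ⟨α, hα⟩
    have hmul := mul_le_mul_of_nonneg_right hsum (zero_le_one.trans hpos)
    linarith

/-- (Root-theoretic content of "`L/Q` is cominuscule".) If `γ₁, γ₂` are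
roots of `l/q` (each has `m_α = 0`, pairs nonpositively with all `α_i`, and pairs to `-1`
with exactly one `α_i`), then `γ₁ + γ₂` is neither zero nor a root. -/
theorem levi_quotient_cominuscule {V : Type*} [NormedAddCommGroup V]
    [InnerProductSpace ℝ V] (D : IrredRootSystem V)
    (α : V) (hα : α ∈ D.Δ) (hcom : D.m D.θ α = 1)
    {r : ℕ} (a : Fin r → V) (ha : D.IsOrthLongSeq α a)
    (γ₁ γ₂ : V) (h₁ : γ₁ ∈ D.Φ) (h₂ : γ₂ ∈ D.Φ)
    (hm₁ : D.m γ₁ α = 0) (hm₂ : D.m γ₂ α = 0)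
    (hle₁ : ∀ i, rpair γ₁ (a i) ≤ 0) (hle₂ : ∀ i, rpair γ₂ (a i) ≤ 0)
    (hone₁ : ∃! i, rpair γ₁ (a i) = -1) (hone₂ : ∃! i, rpair γ₂ (a i) = -1) :
    γ₁ + γ₂ ≠ 0 ∧ γ₁ + γ₂ ∉ D.Φ := by
  exact levi_quotient_cominuscule_general D hα (fun i => (ha.1 i).1)
    (fun i => (ha.2.1 i).2.trans hcom.symm) (fun i j => ha.2.2 i j) h₁ h₂ (by omega) hle₁ hle₂
    (hone₁.exists.imp fun i hi => by linarith) (hone₂.exists.imp fun i hi => by linarith)
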